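/- Let d ≥ 3 and let X₁,…,X_N and Y₁,…,Y_N be 2N independent random points uniformly distributed in [0,1]^d, with L_N = L_MBM(X₁,…,X_N; Y₁,…,Y_N). Then liminf_{N→∞} E(L_N)/N^{1−1/d} > 0; that is, the limit constant β_MBM(d) of E(L_N)/N^{1−1/d} is strictly positive. -/

import Mathlib

open MeasureTheory ProbabilityTheory Filter

noncomputable section

/-- The unit cube `[0,1]^d` in Euclidean space `ℝ^d`. -/
def unitCube (d : ℕ) : Set (EuclideanSpace ℝ (Fin d)) :=
  {x | ∀ i, x i ∈ Set.Icc (0 : ℝ) 1}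

/-- The uniform probability measure on the unit cube `[0,1]^d`
(the cube has Lebesgue measure one, so the restriction of Lebesgue measure
to the cube is the uniform probability measure on it). -/
def unifCube (d : ℕ) : Measure (EuclideanSpace ℝ (Fin d)) :=
  volume.restrict (unitCube d)

/-- `LMBMon X Y A B` is the minimum total Euclidean length of a partial bipartite
matching pairing `min A.card B.card` of the points `X j, j ∈ A` with as many of the
points `Y j, j ∈ B`, each pair consisting of one `X`-point and one `Y`-point. -/
def LMBMon {d N₁ N₂ : ℕ} (X : Fin N₁ → EuclideanSpace ℝ (Fin d))
    (Y : Fin N₂ → EuclideanSpace ℝ (Fin d)) (A : Finset (Fin N₁)) (B : Finset (Fin N₂)) : ℝ :=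
  sInf { s | ∃ (σ : Fin (min A.card B.card) ↪ Fin N₁) (τ : Fin (min A.card B.card) ↪ Fin N₂),
    (∀ i, σ i ∈ A) ∧ (∀ i, τ i ∈ B) ∧ s = ∑ i, dist (X (σ i)) (Y (τ i)) }

/-- `LMBM X Y` : the minimum total Euclidean length of a bipartite matching between the
points of `X` and the points of `Y`; if the two families have different cardinalities
`N₁ ≠ N₂`, it is the minimum length of a partial matching pairing `min N₁ N₂` points of
each family, leaving `|N₁ - N₂|` points unmatched. -/
def LMBM {d N₁ N₂ : ℕ} (X : Fin N₁ → EuclideanSpace ℝ (Fin d))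
    (Y : Fin N₂ → EuclideanSpace ℝ (Fin d)) : ℝ :=
  LMBMon X Y Finset.univ Finset.univ

/-- `MP d lam`: the expected length of a minimum bipartite matching in the Poissonized
model on `[0,1]^d` with intensity `lam`: the numbers `n₁, n₂` of points of the two
families are independent Poisson(lam) variables and the points are i.i.d. uniform
on the cube. -/
def MP (d : ℕ) (lam : ℝ) : ℝ :=
  ∑' n₁ : ℕ, ∑' n₂ : ℕ,
    (Real.exp (-lam) * lam ^ n₁ / n₁.factorial) *
      ((Real.exp (-lam) * lam ^ n₂ / n₂.factorial) *
        ∫ p : (Fin n₁ → EuclideanSpace ℝ (Fin d)) × (Fin n₂ → EuclideanSpace ℝ (Fin d)),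
          LMBM p.1 p.2 ∂ ((Measure.pi fun _ => unifCube d).prod (Measure.pi fun _ => unifCube d)))

end

lemma LMBM_eq {d N : ℕ} (X Y : Fin N → EuclideanSpace ℝ (Fin d)) :
    LMBM X Y = ⨅ π : Equiv.Perm (Fin N), ∑ i, dist (X i) (Y (π i)) := by
  unfold LMBM LMBMon iInf
  congr 1
  have hc : min (Finset.univ : Finset (Fin N)).card (Finset.univ : Finset (Fin N)).card = N := by
    simp
  generalize min (Finset.univ : Finset (Fin N)).card (Finset.univ : Finset (Fin N)).card = n at hc
  subst hc
  ext s
  constructor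
  · rintro ⟨σ, τ, -, -, rfl⟩
    let σ' : Equiv.Perm (Fin n) := Equiv.ofBijective σ (Finite.injective_iff_bijective.1 σ.injective)
    let τ' : Equiv.Perm (Fin n) := Equiv.ofBijective τ (Finite.injective_iff_bijective.1 τ.injective)
    refine ⟨σ'.symm.trans τ', ?_⟩
    refine (Equiv.sum_comp σ' _).symm.trans ?_
    simp [σ', τ']
  · rintro ⟨π, rfl⟩
    exact ⟨Function.Embedding.refl _, π.toEmbedding, by simp, by simp, by simp⟩

lemma LMBM_le {d N : ℕ} (X Y : Fin N → EuclideanSpace ℝ (Fin d)) (π : Equiv.Perm (Fin N)) :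
    LMBM X Y ≤ ∑ i, dist (X i) (Y (π i)) := by
  rw [LMBM_eq]
  exact ciInf_le (Set.finite_range _).bddBelow π

lemma le_LMBM {d N : ℕ} (X Y : Fin N → EuclideanSpace ℝ (Fin d)) (a : ℝ)
    (h : ∀ π : Equiv.Perm (Fin N), a ≤ ∑ i, dist (X i) (Y (π i))) : a ≤ LMBM X Y := by
  rw [LMBM_eq]
  exact le_ciInf h

lemma measurable_LMBM {d N : ℕ} {Ω : Type*} [MeasurableSpace Ω]
    {X Y : Fin N → Ω → EuclideanSpace ℝ (Fin d)} (hX : ∀ i, Measurable (X i))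
    (hY : ∀ i, Measurable (Y i)) :
    Measurable (fun ω => LMBM (fun i => X i ω) (fun i => Y i ω)) := by
  simp_rw [LMBM_eq]
  refine Measurable.iInf fun π => ?_
  exact Finset.measurable_sum _ fun i _ => (hX i).dist (hY _)

/-- deterministic multiscale matching bound -/
lemma exists_matching {ι : Type*} [DecidableEq ι] {N K : ℕ} (cx cy : ℕ → Fin N → ι)
    (S : ℕ → Finset ι) (hSx : ∀ k i, cx k i ∈ S k)
    (hxy : ∀ k l, k ≤ l → ∀ i j, cx l i = cy l j → cx k i = cy k j)
    (w : ℕ → ℝ) (hw : ∀ k, 0 < w k) :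
    ∃ π : Equiv.Perm (Fin N),
      ∑ i, ∑ k ∈ Finset.range K, w k * (if cx k i = cy k (π i) then 0 else 1) ≤
      ∑ k ∈ Finset.range K, w k * ∑ q ∈ S k,
        |∑ i, ((if cx k i = q then (1:ℝ) else 0) - (if cy k i = q then 1 else 0))| := by
  let I : ℕ → Fin N → Fin N → ℝ := fun k i j => if cx k i = cy k j then 0 else 1
  let F : Equiv.Perm (Fin N) → ℝ := fun π => ∑ i, ∑ k ∈ Finset.range K, w k * I k i (π i)
  obtain ⟨π, hπ⟩ := Finite.exists_min F
  refine ⟨π, ?_⟩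
  have key : ∀ k < K, ∀ q, (∀ i, cx k i = q → cy k (π i) = q) ∨
      (∀ i, cy k (π i) = q → cx k i = q) := by
    intro k hk q
    by_contra! hcon
    obtain ⟨⟨a, ha, ha'⟩, ⟨b, hb, hb'⟩⟩ := hcon
    have hab : a ≠ b := by rintro rfl; exact ha' hb
    have h1 := hπ (π * Equiv.swap a b)
    have h2 : F (π * Equiv.swap a b) < F π := by
      have e : ∀ G : Fin N → Fin N → ℝ, ∀ ρ : Equiv.Perm (Fin N), ∑ i, G i (ρ i) = G a (ρ a) + (G b (ρ b) +
          ∑ i ∈ (Finset.univ.erase a).erase b, G i (ρ i)) := by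
        intro G ρ
        rw [Finset.add_sum_erase _ (fun i => G i (ρ i)) (by simp [hab.symm] : b ∈ Finset.univ.erase a),
          Finset.add_sum_erase _ (fun i => G i (ρ i)) (Finset.mem_univ _)]
      simp only [F]
      rw [e (fun i j => ∑ k ∈ Finset.range K, w k * I k i j),
        e (fun i j => ∑ k ∈ Finset.range K, w k * I k i j)]
      have e3 : ∑ i ∈ (Finset.univ.erase a).erase b, ∑ k ∈ Finset.range K, w k * I k i ((π * Equiv.swap a b) i)
          = ∑ i ∈ (Finset.univ.erase a).erase b, ∑ k ∈ Finset.range K, w k * I k i (π i) := by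
        refine Finset.sum_congr rfl fun i hi => ?_
        simp only [Finset.mem_erase] at hi
        rw [Equiv.Perm.mul_apply, Equiv.swap_apply_of_ne_of_ne hi.2.1 hi.1]
      rw [e3, ← add_assoc, ← add_assoc]
      refine (add_lt_add_iff_right _).2 ?_
      rw [← Finset.sum_add_distrib, ← Finset.sum_add_distrib]
      simp only [Equiv.Perm.mul_apply, Equiv.swap_apply_left, Equiv.swap_apply_right]
      have hnab : cx k a = cy k (π b) := by rw [ha, hb]
      have hIk1 : I k a (π a) = 1 := by
        simp only [I]; rw [if_neg]; rw [ha]; exact fun h => ha' h.symm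
      have hIk2 : I k b (π b) = 1 := by
        simp only [I]; rw [if_neg]; rw [hb]; exact hb'
      have hI1 : ∀ l i j, I l i j ≤ 1 := by
        intro l i j; simp only [I]; split_ifs <;> norm_num
      have hl : ∀ l, I l a (π b) + I l b (π a) ≤ I l a (π a) + I l b (π b) := by
        intro l
        rcases le_total l k with h | h
        · have := hxy l k h _ _ hnab
          simp only [I]
          split_ifs <;> first | (norm_num; done) | (exfalso; simp_all)
        · have h3 : I l a (π a) = 1 := by
            simp only [I] at hIk1 ⊢
            rw [if_neg]; intro h4; rw [if_pos (hxy k l h _ _ h4)] at hIk1; norm_num at hIk1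
          have h3' : I l b (π b) = 1 := by
            simp only [I] at hIk2 ⊢
            rw [if_neg]; intro h4; rw [if_pos (hxy k l h _ _ h4)] at hIk2; norm_num at hIk2
          rw [h3, h3']
          exact add_le_add (hI1 _ _ _) (hI1 _ _ _)
      refine Finset.sum_lt_sum (fun l _ => ?_) ⟨k, Finset.mem_range.2 hk, ?_⟩
      · rw [← mul_add, ← mul_add]
        exact mul_le_mul_of_nonneg_left (hl l) (hw l).le
      · rw [← mul_add, ← mul_add]
        refine mul_lt_mul_of_pos_left ?_ (hw k)
        have : I k a (π b) = 0 := by simp only [I]; rw [if_pos hnab]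
        rw [this, hIk1, hIk2]
        linarith [hI1 k b (π a)]
    linarith
  rw [Finset.sum_comm]
  refine Finset.sum_le_sum fun k hk => ?_
  rw [← Finset.mul_sum]
  refine mul_le_mul_of_nonneg_left ?_ (hw k).le
  have hk := Finset.mem_range.1 hk
  have e1 : ∀ i, (if cx k i = cy k (π i) then (0:ℝ) else 1) =
      ∑ q ∈ S k, (if cx k i = q then (if cy k (π i) = q then 0 else 1) else 0) := by
    intro i
    rw [Finset.sum_ite_eq, if_pos (hSx k i)]
    simp only [eq_comm]
  simp_rw [e1]
  rw [Finset.sum_comm]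
  refine Finset.sum_le_sum fun q _ => ?_
  rw [Finset.sum_sub_distrib, ← Equiv.sum_comp π (fun i => if cy k i = q then (1:ℝ) else 0),
    ← Finset.sum_sub_distrib]
  rcases key k hk q with h | h
  · refine le_trans (le_of_eq ?_) (abs_nonneg _)
    refine Finset.sum_eq_zero fun i _ => ?_
    split_ifs with h1 h2 <;> simp_all
  · refine le_trans (Finset.sum_le_sum fun i _ => ?_) (le_abs_self _)
    have := h i
    split_ifs <;> first | (norm_num; done) | (exfalso; simp_all)

lemma unifCube_box {d : ℕ} (S : Set (EuclideanSpace ℝ (Fin d))) (a : Fin d → ℝ) (l : ℝ)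
    (hl : 0 ≤ l) (hS : ∀ x ∈ S, ∀ i, x i ∈ Set.Icc (a i) (a i + l)) :
    unifCube d S ≤ ENNReal.ofReal (l ^ d) := by
  have h1 : S ⊆ (@WithLp.ofLp 2 (Fin d → ℝ)) ⁻¹' (Set.Icc a (fun i => a i + l)) := by
    intro x hx
    exact ⟨fun i => (hS x hx i).1, fun i => (hS x hx i).2⟩
  refine (Measure.restrict_apply_le _ _).trans ((measure_mono h1).trans ?_)
  rw [(PiLp.volume_preserving_ofLp (Fin d)).measure_preimage measurableSet_Icc.nullMeasurableSet,
    Real.volume_Icc_pi]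
  simp [ENNReal.ofReal_pow hl]

lemma measurableSet_unitCube (d : ℕ) : MeasurableSet (unitCube d) := by
  unfold unitCube
  rw [Set.ofPred_forall]
  refine MeasurableSet.iInter fun i => ?_
  exact measurableSet_Icc.preimage (by fun_prop : Measurable fun x : EuclideanSpace ℝ (Fin d) => x i)

noncomputable def cell (d k : ℕ) (x : EuclideanSpace ℝ (Fin d)) : Fin d → ℤ := fun i => ⌊(2:ℝ) ^ k * x i⌋

lemma measurable_cell (d k : ℕ) : Measurable (cell d k) := by
  refine measurable_pi_lambda _ fun i => ?_
  exact Int.measurable_floor.comp (by fun_prop)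

lemma unifCube_cell (d k : ℕ) (q : Fin d → ℤ) :
    unifCube d {x | cell d k x = q} ≤ ENNReal.ofReal (((2:ℝ) ^ k)⁻¹ ^ d) := by
  refine unifCube_box _ (fun i => q i * ((2:ℝ) ^ k)⁻¹) _ (by positivity) ?_
  intro x hx i
  have h : ⌊(2:ℝ) ^ k * x i⌋ = q i := congrFun hx i
  rw [Int.floor_eq_iff] at h
  have h2 : (0:ℝ) < 2 ^ k := by positivity
  constructor
  · rw [← div_eq_mul_inv, div_le_iff₀ h2]; linarith
  · rw [← add_one_mul, ← div_eq_mul_inv, le_div_iff₀ h2]; linarith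

lemma cell_nested {d k l : ℕ} (hkl : k ≤ l) {x y : EuclideanSpace ℝ (Fin d)}
    (h : cell d l x = cell d l y) : cell d k x = cell d k y := by
  have key : ∀ z : EuclideanSpace ℝ (Fin d), ∀ i, cell d k z i = cell d l z i / (2 ^ (l - k) : ℕ) := by
    intro z i
    simp only [cell]
    rw [← Int.floor_div_natCast]
    congr 1
    obtain ⟨m, rfl⟩ := Nat.exists_eq_add_of_le hkl
    rw [Nat.add_sub_cancel_left, pow_add]
    push_cast
    field_simp
  funext i
  rw [key, key, h]

lemma dist_le_sum {d : ℕ} (x y : EuclideanSpace ℝ (Fin d)) (l : ℝ)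
    (h : ∀ i, |x i - y i| ≤ l) : dist x y ≤ d * l := by
  rw [EuclideanSpace.dist_eq]
  refine (Real.sqrt_le_sqrt (y := (∑ i, |x i - y i|) ^ 2) ?_).trans ?_
  · simp only [Real.dist_eq]
    exact Finset.sum_sq_le_sq_sum_of_nonneg (fun i _ => abs_nonneg _)
  · rw [Real.sqrt_sq (by positivity)]
    refine (Finset.sum_le_sum fun i _ => h i).trans (by simp)

lemma dist_le_cell {d k : ℕ} {x y : EuclideanSpace ℝ (Fin d)} (h : cell d k x = cell d k y) :
    dist x y ≤ d * ((2:ℝ) ^ k)⁻¹ := by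
  refine dist_le_sum _ _ _ fun i => ?_
  have h1 : ⌊(2:ℝ) ^ k * x i⌋ = ⌊(2:ℝ) ^ k * y i⌋ := congrFun h i
  have h2 := (Int.abs_sub_lt_one_of_floor_eq_floor h1).le
  rw [← mul_sub, abs_mul, abs_of_pos (by positivity : (0:ℝ) < 2 ^ k)] at h2
  rw [← one_div, le_div_iff₀ (by positivity)]
  linarith

lemma dist_le_cube {d : ℕ} {x y : EuclideanSpace ℝ (Fin d)} (hx : x ∈ unitCube d)
    (hy : y ∈ unitCube d) : dist x y ≤ d := by
  have := dist_le_sum x y 1 fun i => by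
    have h1 := hx i
    have h2 := hy i
    rw [abs_le]; constructor <;> linarith [h1.1, h1.2, h2.1, h2.2]
  simpa using this

lemma dist_multiscale {d : ℕ} {x y : EuclideanSpace ℝ (Fin d)} (hx : x ∈ unitCube d)
    (hy : y ∈ unitCube d) (K : ℕ) :
    dist x y ≤ d * ((2:ℝ) ^ K)⁻¹ + ∑ k ∈ Finset.range (K + 1),
      (d * ((2:ℝ) ^ k)⁻¹) * (if cell d k x = cell d k y then 0 else 1) := by
  induction K with
  | zero =>
    have := dist_le_cube hx hy
    simp only [pow_zero, inv_one, mul_one, zero_add, Finset.range_one, Finset.sum_singleton]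
    split_ifs <;> simp
    · exact this
    · linarith [Nat.cast_nonneg (α := ℝ) d]
  | succ K ih =>
    by_cases h : cell d (K + 1) x = cell d (K + 1) y
    · refine (dist_le_cell h).trans (le_add_of_nonneg_right ?_)
      refine Finset.sum_nonneg fun k _ => ?_
      split_ifs <;> positivity
    · rw [Finset.sum_range_succ, if_neg h]
      refine ih.trans (le_of_eq ?_)
      rw [pow_succ]
      ring

lemma cell_mem {d k : ℕ} {x : EuclideanSpace ℝ (Fin d)} (hx : x ∈ unitCube d) :
    cell d k x ∈ Fintype.piFinset (fun _ : Fin d => Finset.Icc (0:ℤ) (2 ^ k)) := by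
  rw [Fintype.mem_piFinset]
  intro i
  have h2 : (0:ℝ) < 2 ^ k := by positivity
  rw [Finset.mem_Icc]
  constructor
  · exact Int.floor_nonneg.2 (mul_nonneg h2.le (hx i).1)
  · have : (2:ℝ) ^ k * x i ≤ ((2 ^ k : ℤ) : ℝ) := by
      push_cast
      exact mul_le_of_le_one_right h2.le (hx i).2
    exact Int.cast_le.1 ((Int.floor_le _).trans this)

lemma card_cells (d k : ℕ) :
    ((Fintype.piFinset (fun _ : Fin d => Finset.Icc (0:ℤ) (2 ^ k))).card : ℝ) ≤ 2 ^ d * (2 ^ k) ^ d := by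
  have h0 : ((2:ℤ) ^ k + 1).toNat = 2 ^ k + 1 := by
    have : ((2:ℤ) ^ k + 1) = ((2 ^ k + 1 : ℕ) : ℤ) := by push_cast; rfl
    rw [this, Int.toNat_natCast]
  rw [Fintype.card_piFinset]
  simp only [Int.card_Icc, sub_zero, h0, Finset.prod_const, Finset.card_univ, Fintype.card_fin]
  push_cast
  rw [← mul_pow]
  refine pow_le_pow_left₀ (by positivity) ?_ _
  have : (1:ℝ) ≤ 2 ^ k := one_le_pow₀ (by norm_num)
  linarith

lemma integral_abs_le {Ω E : Type*} [MeasurableSpace Ω] [MeasurableSpace E] (μ : Measure Ω)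
    [IsProbabilityMeasure μ] (Z : ℕ ⊕ ℕ → Ω → E) (hm : ∀ n, Measurable (Z n))
    (hi : iIndepFun Z μ) (ν : Measure E) (hν : ∀ n, Measure.map (Z n) μ = ν)
    (A : Set E) [DecidablePred (· ∈ A)] (hA : MeasurableSet A) (p : ℝ) (hp0 : 0 ≤ p)
    (hp : ν A ≤ ENNReal.ofReal p) (N : ℕ) (t : ℝ) (ht : 0 < t) :
    Integrable (fun ω => |∑ i : Fin N, ((if Z (Sum.inl i) ω ∈ A then (1:ℝ) else 0) -
        (if Z (Sum.inr i) ω ∈ A then 1 else 0))|) μ ∧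
    ∫ ω, |∑ i : Fin N, ((if Z (Sum.inl i) ω ∈ A then (1:ℝ) else 0) -
        (if Z (Sum.inr i) ω ∈ A then 1 else 0))| ∂μ ≤ (t + 2 * N * p / t) / 2 := by
  let e : Fin N ⊕ Fin N → ℕ ⊕ ℕ := Sum.map Fin.val Fin.val
  have he : Function.Injective e := Sum.map_injective.2 ⟨Fin.val_injective, Fin.val_injective⟩
  let sg : Fin N ⊕ Fin N → ℝ := Sum.elim (fun _ => 1) (fun _ => -1)
  let g : Fin N ⊕ Fin N → E → ℝ := fun s => A.indicator (fun _ => sg s)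
  have hg : ∀ s, Measurable (g s) := fun s => measurable_const.indicator hA
  let W : Fin N ⊕ Fin N → Ω → ℝ := fun s => g s ∘ Z (e s)
  have hWm : ∀ s, Measurable (W s) := fun s => (hg s).comp (hm _)
  have hWi : iIndepFun W μ := (hi.precomp he).comp g hg
  have hsg : ∀ s, |sg s| = 1 := by rintro (s | s) <;> simp [sg]
  have hWb : ∀ s ω, ‖W s ω‖ ≤ 1 := by
    intro s ω
    simp only [W, g, Function.comp, Set.indicator]
    split_ifs
    · rw [Real.norm_eq_abs, hsg]
    · simp
  have hWL : ∀ s, MemLp (W s) 2 μ := fun s =>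
    MemLp.of_bound (hWm s).aestronglyMeasurable 1 (ae_of_all _ (hWb s))
  have hZA : ∀ n, μ (Z n ⁻¹' A) = ν A := fun n => by
    rw [← hν n, Measure.map_apply (hm n) hA]
  have hint : ∀ s, ∫ ω, W s ω ∂μ = sg s * ν.real A := by
    intro s
    have : W s = (Z (e s) ⁻¹' A).indicator (fun _ => sg s) := by
      funext ω; simp [W, g, Set.indicator]
    rw [this, integral_indicator_const _ ((hm _) hA), Measure.real, hZA, smul_eq_mul, mul_comm]
    rfl
  have hpr : ν.real A ≤ p := ENNReal.toReal_le_of_le_ofReal hp0 hp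
  have hvar : ∀ s, variance (W s) μ ≤ p := by
    intro s
    refine (variance_le_expectation_sq (hWm s).aestronglyMeasurable).trans ?_
    have : W s ^ 2 = (Z (e s) ⁻¹' A).indicator (fun _ => (1:ℝ)) := by
      funext ω
      simp only [Pi.pow_apply, W, g, Function.comp, Set.indicator, Set.mem_preimage]
      split_ifs
      · rw [← sq_abs, hsg]; norm_num
      · norm_num
    rw [this, integral_indicator_const _ ((hm _) hA), Measure.real, hZA, smul_eq_mul, mul_one]
    exact hpr
  let D : Ω → ℝ := ∑ s, W s
  have hD : ∀ ω, D ω = ∑ i : Fin N, ((if Z (Sum.inl i) ω ∈ A then (1:ℝ) else 0) -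
        (if Z (Sum.inr i) ω ∈ A then 1 else 0)) := by
    intro ω
    have h0 : D ω = ∑ s, W s ω := Finset.sum_apply _ _ _
    rw [h0, Fintype.sum_sum_type, Finset.sum_sub_distrib]
    have hl : ∀ i : Fin N, W (Sum.inl i) ω = if Z (Sum.inl i) ω ∈ A then (1:ℝ) else 0 := by
      intro i
      by_cases h : Z (Sum.inl i) ω ∈ A
      · rw [if_pos h]; exact Set.indicator_of_mem h (fun _ => (1:ℝ))
      · rw [if_neg h]; exact Set.indicator_of_notMem h (fun _ => (1:ℝ))
    have hr : ∀ i : Fin N, W (Sum.inr i) ω = -if Z (Sum.inr i) ω ∈ A then (1:ℝ) else 0 := by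
      intro i
      by_cases h : Z (Sum.inr i) ω ∈ A
      · rw [if_pos h]; exact Set.indicator_of_mem h (fun _ => (-1:ℝ))
      · rw [if_neg h, neg_zero]; exact Set.indicator_of_notMem h (fun _ => (-1:ℝ))
    simp only [hl, hr, Finset.sum_neg_distrib, sub_eq_add_neg]
  simp_rw [← hD]
  have hDL : MemLp D 2 μ := memLp_finsetSum' _ fun s _ => hWL s
  have hDv : variance D μ ≤ 2 * N * p := by
    rw [IndepFun.variance_sum (fun s _ => hWL s) (fun i _ j _ hij => hWi.indepFun hij)]
    refine (Finset.sum_le_sum fun s _ => hvar s).trans (le_of_eq ?_)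
    rw [Finset.sum_const, Finset.card_univ, Fintype.card_sum, Fintype.card_fin, nsmul_eq_mul]
    push_cast
    ring
  have hD0 : ∫ ω, D ω ∂μ = 0 := by
    simp only [D, Finset.sum_apply]
    rw [integral_finsetSum _ fun s _ => (hWL s).integrable one_le_two]
    simp [hint, sg]
  have hD2 : ∫ ω, D ω ^ 2 ∂μ ≤ 2 * N * p := by
    rw [← variance_of_integral_eq_zero hDL.aemeasurable hD0]; exact hDv
  have hDi : Integrable D μ := hDL.integrable one_le_two
  refine ⟨hDi.abs, ?_⟩
  have : ∀ ω, |D ω| ≤ (t + D ω ^ 2 / t) / 2 := by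
    intro ω
    have h := sq_nonneg (|D ω| - t)
    rw [sub_sq, sq_abs] at h
    have : D ω ^ 2 / t ≥ 2 * |D ω| - t := by
      rw [ge_iff_le, le_div_iff₀ ht]; nlinarith
    linarith
  have hi2 : Integrable (fun ω => D ω ^ 2) μ := hDL.integrable_sq
  refine (integral_mono hDi.abs (((integrable_const t).add (hi2.div_const t)).div_const 2) this).trans ?_
  simp only [Pi.add_apply]
  rw [integral_div, integral_add (integrable_const t) (hi2.div_const t), integral_div]
  simp only [integral_const, probReal_univ, smul_eq_mul, one_mul]
  gcongr

lemma prob_close {d : ℕ} {Ω : Type*} [MeasurableSpace Ω] (μ : Measure Ω)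
    [IsProbabilityMeasure μ] (U V : Ω → EuclideanSpace ℝ (Fin d)) (hU : Measurable U)
    (hV : Measurable V) (h : IndepFun U V μ) (hv : Measure.map V μ = unifCube d) (r : ℝ)
    (hr : 0 ≤ r) : μ.real {ω | dist (U ω) (V ω) < r} ≤ (2 * r) ^ d := by
  refine ENNReal.toReal_le_of_le_ofReal (by positivity) ?_
  have hS : MeasurableSet {z : EuclideanSpace ℝ (Fin d) × EuclideanSpace ℝ (Fin d) | dist z.1 z.2 < r} :=
    measurableSet_lt (by fun_prop) measurable_const
  have h1 := (indepFun_iff_map_prod_eq_prod_map_map hU.aemeasurable hV.aemeasurable).1 h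
  have h2 : μ {ω | dist (U ω) (V ω) < r} = (μ.map U).prod (μ.map V)
      {z : EuclideanSpace ℝ (Fin d) × EuclideanSpace ℝ (Fin d) | dist z.1 z.2 < r} := by
    rw [← h1, Measure.map_apply (hU.prodMk hV) hS]
    rfl
  have := Measure.isProbabilityMeasure_map (μ := μ) hU.aemeasurable
  have := Measure.isProbabilityMeasure_map (μ := μ) hV.aemeasurable
  rw [h2, Measure.prod_apply hS]
  refine (lintegral_mono (g := fun _ => ENNReal.ofReal ((2 * r) ^ d)) fun x => ?_).trans (by simp)
  rw [hv]
  refine unifCube_box _ (fun i => x i - r) _ (by positivity) ?_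
  intro y hy i
  have h3 : dist x y < r := hy
  have h4 : |x i - y i| ≤ dist x y := by
    rw [dist_eq_norm]
    exact PiLp.norm_apply_le (x - y) i
  have := abs_le.1 (h4.trans h3.le)
  constructor <;> linarith [this.1, this.2]

section Main

variable {d : ℕ} {Ω : Type*} [MeasurableSpace Ω] (μ : Measure Ω)
  (X Y : ℕ → Ω → EuclideanSpace ℝ (Fin d))

lemma ae_cube (hmeas : ∀ n, Measurable (Sum.elim X Y n))
    (hunif : ∀ n, Measure.map (Sum.elim X Y n) μ = unifCube d) :
    ∀ᵐ ω ∂μ, ∀ n, Sum.elim X Y n ω ∈ unitCube d := by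
  rw [ae_all_iff]
  intro n
  refine ae_of_ae_map (p := fun x => x ∈ unitCube d) (hmeas n).aemeasurable ?_
  rw [hunif n]
  exact ae_restrict_mem (measurableSet_unitCube d)

variable [IsProbabilityMeasure μ]

lemma integrable_LMBM (hmeas : ∀ n, Measurable (Sum.elim X Y n))
    (hunif : ∀ n, Measure.map (Sum.elim X Y n) μ = unifCube d) (N : ℕ) :
    Integrable (fun ω => LMBM (fun i : Fin N => X i ω) (fun j : Fin N => Y j ω)) μ := by
  have hX : ∀ i, Measurable (X i) := fun i => hmeas (Sum.inl i)
  have hY : ∀ i, Measurable (Y i) := fun i => hmeas (Sum.inr i)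
  refine Integrable.of_bound (measurable_LMBM (X := fun i : Fin N => X i) (Y := fun i : Fin N => Y i)
    (fun i => hX i) (fun i => hY i)).aestronglyMeasurable (N * d) ?_
  filter_upwards [ae_cube μ X Y hmeas hunif] with ω hω
  rw [Real.norm_eq_abs, abs_of_nonneg (le_LMBM _ _ _ fun π => by positivity)]
  refine (LMBM_le _ _ 1).trans ?_
  refine (Finset.sum_le_sum (g := fun _ => (d:ℝ)) fun (i : Fin N) _ =>
    dist_le_cube (hω (Sum.inl i)) (hω (Sum.inr i))).trans ?_
  simp

lemma lower_bound (hd : 3 ≤ d) (hmeas : ∀ n, Measurable (Sum.elim X Y n))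
    (hindep : iIndepFun (Sum.elim X Y) μ)
    (hunif : ∀ n, Measure.map (Sum.elim X Y n) μ = unifCube d) (N : ℕ) (hN : 1 ≤ N) :
    (2:ℝ) ^ (-(1 / (d:ℝ))) / 4 * (N:ℝ) ^ (1 - 1 / (d:ℝ)) ≤
      ∫ ω, LMBM (fun i : Fin N => X i ω) (fun j : Fin N => Y j ω) ∂μ := by
  have hX : ∀ i, Measurable (X i) := fun i => hmeas (Sum.inl i)
  have hY : ∀ i, Measurable (Y i) := fun i => hmeas (Sum.inr i)
  have hN0 : (0:ℝ) < N := by exact_mod_cast hN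
  have hd0 : (d:ℝ) ≠ 0 := by positivity
  set r : ℝ := (2 * N : ℝ) ^ (-(1 / (d:ℝ))) / 2 with hr
  have hr0 : 0 < r := by positivity
  have hrd : (2 * r) ^ d = (2 * N : ℝ)⁻¹ := by
    rw [hr, mul_div_cancel₀ _ two_ne_zero, ← Real.rpow_natCast, ← Real.rpow_mul (by positivity),
      neg_mul, one_div_mul_cancel hd0, Real.rpow_neg_one]
  let S : Fin N → Fin N → Set Ω := fun i j => {ω | dist (X i ω) (Y j ω) < r}
  have hS : ∀ i j, MeasurableSet (S i j) := fun i j =>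
    measurableSet_lt ((hX i).dist (hY j)) measurable_const
  have hSp : ∀ i j, μ.real (S i j) ≤ (2 * N : ℝ)⁻¹ := by
    intro i j
    rw [← hrd]
    exact prob_close μ (X i) (Y j) (hX i) (hY j)
      (hindep.indepFun (i := Sum.inl (i:ℕ)) (j := Sum.inr (j:ℕ)) (by simp)) (hunif (Sum.inr j)) r hr0.le
  let G : Ω → ℝ := fun ω => ∑ i, r * (1 - ∑ j, (S i j).indicator (fun _ => (1:ℝ)) ω)
  have hI : ∀ i j, Integrable ((S i j).indicator (fun _ => (1:ℝ))) μ := fun i j =>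
    (integrable_const _).indicator (hS i j)
  have hI2 : ∀ i, Integrable (fun ω => ∑ j, (S i j).indicator (fun _ => (1:ℝ)) ω) μ := fun i =>
    integrable_finsetSum _ fun j _ => hI i j
  have hI3 : ∀ i, Integrable (fun ω => r * (1 - ∑ j, (S i j).indicator (fun _ => (1:ℝ)) ω)) μ := fun i =>
    ((integrable_const _).sub (hI2 i)).const_mul r
  have hGL : ∫ ω, G ω ∂μ ≤ ∫ ω, LMBM (fun i : Fin N => X i ω) (fun j : Fin N => Y j ω) ∂μ := by
    refine integral_mono (integrable_finsetSum _ fun i _ => hI3 i)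
      (integrable_LMBM μ X Y hmeas hunif N) fun ω => ?_
    refine le_LMBM _ _ _ fun π => Finset.sum_le_sum fun i _ => ?_
    have h0 : ∀ j, 0 ≤ (S i j).indicator (fun _ => (1:ℝ)) ω := fun j =>
      Set.indicator_nonneg (fun _ _ => zero_le_one) _
    have h1 := Finset.single_le_sum (fun j _ => h0 j) (Finset.mem_univ (π i))
    by_cases h : ω ∈ S i (π i)
    · rw [Set.indicator_of_mem h] at h1
      refine le_trans ?_ dist_nonneg
      exact mul_nonpos_of_nonneg_of_nonpos hr0.le (by linarith)
    · have h2 : r ≤ dist (X i ω) (Y (π i) ω) := not_lt.1 h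
      refine le_trans ?_ h2
      have := Finset.sum_nonneg (fun j (_ : j ∈ Finset.univ) => h0 j)
      nlinarith
  refine le_trans ?_ hGL
  have hG : ∫ ω, G ω ∂μ = ∑ i : Fin N, r * (1 - ∑ j : Fin N, μ.real (S i j)) := by
    simp only [G]
    rw [integral_finsetSum _ fun i _ => hI3 i]
    refine Finset.sum_congr rfl fun i _ => ?_
    rw [integral_const_mul, integral_sub (integrable_const _) (hI2 i),
      integral_finsetSum _ fun j _ => hI i j]
    congr 2
    · simp
    · refine Finset.sum_congr rfl fun j _ => ?_
      rw [integral_indicator_const _ (hS i j)]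
      simp
  rw [hG]
  have h5 : ∀ i : Fin N, r * (1 / 2) ≤ r * (1 - ∑ j : Fin N, μ.real (S i j)) := by
    intro i
    refine mul_le_mul_of_nonneg_left ?_ hr0.le
    have : ∑ j : Fin N, μ.real (S i j) ≤ 1 / 2 := by
      refine (Finset.sum_le_sum fun j _ => hSp i j).trans (le_of_eq ?_)
      simp
      field_simp
    linarith
  refine le_trans (le_of_eq ?_) (Finset.sum_le_sum fun i _ => h5 i)
  rw [Finset.sum_const, Finset.card_univ, Fintype.card_fin, nsmul_eq_mul, hr,
    Real.mul_rpow (by norm_num) hN0.le, sub_eq_add_neg, Real.rpow_add hN0, Real.rpow_one]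
  ring

lemma upper_bound (hd : 3 ≤ d) (hmeas : ∀ n, Measurable (Sum.elim X Y n))
    (hindep : iIndepFun (Sum.elim X Y) μ)
    (hunif : ∀ n, Measure.map (Sum.elim X Y n) μ = unifCube d) :
    ∃ C : ℝ, ∀ K : ℕ, ∫ ω, LMBM (fun i : Fin (2 ^ (d * K)) => X i ω)
      (fun j : Fin (2 ^ (d * K)) => Y j ω) ∂μ ≤ C * ((2:ℝ) ^ (d * K) * ((2:ℝ) ^ K)⁻¹) := by
  set s : ℝ := Real.sqrt (2 ^ d) with hs
  have hs2 : s ^ 2 = 2 ^ d := Real.sq_sqrt (by positivity)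
  have hs0 : 0 < s := Real.sqrt_pos.2 (by positivity)
  have hs3 : 1 < s / 2 := by
    have h8 : (2:ℝ) ^ 3 ≤ 2 ^ d := pow_le_pow_right₀ (by norm_num) hd
    rw [lt_div_iff₀ two_pos]
    nlinarith
  have hsk : ∀ k : ℕ, ((2:ℝ) ^ k) ^ d = s ^ k * s ^ k := by
    intro k
    rw [← pow_mul, mul_comm k d, pow_mul, ← hs2, ← pow_mul, mul_comm 2 k, pow_mul, sq]
  set C₁ : ℝ := d * 2 ^ d * (3 / 2) * ((s / 2) / (s / 2 - 1)) with hC1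
  refine ⟨d + C₁, fun K => ?_⟩
  set N : ℕ := 2 ^ (d * K) with hN
  have hNr : (2:ℝ) ^ (d * K) = s ^ K * s ^ K := by rw [← hsk, ← pow_mul, mul_comm]
  have hNr' : (N:ℝ) = s ^ K * s ^ K := by rw [← hNr, hN]; push_cast; rfl
  let S : ℕ → Finset (Fin d → ℤ) := fun k => Fintype.piFinset (fun _ : Fin d => Finset.Icc (0:ℤ) (2 ^ k))
  let w : ℕ → ℝ := fun k => d * ((2:ℝ) ^ k)⁻¹
  have hw : ∀ k, 0 < w k := fun k => by
    have : (0:ℝ) < d := by exact_mod_cast (by omega : 0 < d)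
    positivity
  let H : ℕ → (Fin d → ℤ) → Ω → ℝ := fun k q ω => |∑ i : Fin N,
    ((if cell d k (X i ω) = q then (1:ℝ) else 0) - (if cell d k (Y i ω) = q then 1 else 0))|
  have hH : ∀ k q (t : ℝ), 0 < t → Integrable (H k q) μ ∧
      ∫ ω, H k q ω ∂μ ≤ (t + 2 * N * (((2:ℝ) ^ k)⁻¹ ^ d) / t) / 2 := fun k q t ht =>
    integral_abs_le μ (Sum.elim X Y) hmeas hindep (unifCube d) hunif {x | cell d k x = q}
      (measurable_cell d k (measurableSet_singleton q)) _ (by positivity) (unifCube_cell d k q) N t ht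
  have hHi : ∀ k q, Integrable (H k q) μ := fun k q => (hH k q 1 one_pos).1
  have hH2 : ∀ k ≤ K, ∀ q, ∫ ω, H k q ω ∂μ ≤ 3 / 2 * (s ^ K / s ^ k) := by
    intro k hk q
    refine (hH k q (s ^ K / s ^ k) (by positivity)).2.trans (le_of_eq ?_)
    rw [inv_pow, hsk, hNr']
    field_simp
    ring
  have hpt : ∀ᵐ ω ∂μ, LMBM (fun i : Fin N => X i ω) (fun j : Fin N => Y j ω) ≤
      N * (d * ((2:ℝ) ^ K)⁻¹) + ∑ k ∈ Finset.range (K + 1), w k * ∑ q ∈ S k, H k q ω := by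
    filter_upwards [ae_cube μ X Y hmeas hunif] with ω hω
    obtain ⟨π, hπ⟩ := exists_matching (K := K + 1) (fun k (i : Fin N) => cell d k (X i ω))
      (fun k (i : Fin N) => cell d k (Y i ω)) S (fun k i => cell_mem (hω (Sum.inl i)))
      (fun k l hkl i j h => cell_nested hkl h) w hw
    refine (LMBM_le _ _ π).trans ?_
    refine (Finset.sum_le_sum fun (i : Fin N) _ =>
      dist_multiscale (hω (Sum.inl i)) (hω (Sum.inr (π i))) K).trans ?_
    rw [Finset.sum_add_distrib]
    refine add_le_add (by simp) hπ
  have hi1 : ∀ k, Integrable (fun ω => ∑ q ∈ S k, H k q ω) μ := fun k =>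
    integrable_finsetSum _ fun q _ => hHi k q
  have hi2 : Integrable (fun ω => ∑ k ∈ Finset.range (K + 1), w k * ∑ q ∈ S k, H k q ω) μ :=
    integrable_finsetSum _ fun k _ => (hi1 k).const_mul _
  refine (integral_mono_ae (integrable_LMBM μ X Y hmeas hunif N)
    ((integrable_const _).add hi2) hpt).trans ?_
  simp only [Pi.add_apply]
  rw [integral_add (integrable_const _) hi2, integral_finsetSum _ fun k _ => (hi1 k).const_mul _]
  simp only [integral_const, probReal_univ, smul_eq_mul, one_mul]
  have hk : ∀ k ∈ Finset.range (K + 1), ∫ ω, w k * ∑ q ∈ S k, H k q ω ∂μ ≤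
      d * 2 ^ d * (3 / 2) * s ^ K * (s / 2) ^ k := by
    intro k hk
    have hk' : k ≤ K := Nat.lt_succ_iff.1 (Finset.mem_range.1 hk)
    rw [integral_const_mul, integral_finsetSum _ fun q _ => hHi k q]
    have h1 : ∑ q ∈ S k, ∫ ω, H k q ω ∂μ ≤ (2 ^ d * (s ^ k * s ^ k)) * (3 / 2 * (s ^ K / s ^ k)) := by
      refine (Finset.sum_le_sum fun q _ => hH2 k hk' q).trans ?_
      rw [Finset.sum_const, nsmul_eq_mul, ← hsk]
      exact mul_le_mul_of_nonneg_right (card_cells d k) (by positivity)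
    refine (mul_le_mul_of_nonneg_left h1 (hw k).le).trans (le_of_eq ?_)
    simp only [w]
    rw [div_pow]
    field_simp
  have hgeo : ∑ k ∈ Finset.range (K + 1), (s / 2) ^ k ≤ (s / 2) / (s / 2 - 1) * (s / 2) ^ K := by
    rw [geom_sum_eq hs3.ne', div_mul_eq_mul_div]
    refine div_le_div_of_nonneg_right ?_ (by linarith)
    rw [pow_succ]; linarith
  have hsum := Finset.sum_le_sum hk
  rw [← Finset.mul_sum] at hsum
  have h6 := hsum.trans (mul_le_mul_of_nonneg_left hgeo (by positivity))
  refine (add_le_add_right h6 _).trans (le_of_eq ?_)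
  rw [hNr, hNr', hC1, div_pow]
  ring

end Main

theorem liminf_EL_pos
    (d : ℕ) (hd : 3 ≤ d)
    (Ω : Type*) [MeasureSpace Ω] [IsProbabilityMeasure (ℙ : Measure Ω)]
    (X Y : ℕ → Ω → EuclideanSpace ℝ (Fin d))
    (hmeas : ∀ n, Measurable (Sum.elim X Y n))
    (hindep : iIndepFun (Sum.elim X Y) ℙ)
    (hunif : ∀ n, Measure.map (Sum.elim X Y n) ℙ = unifCube d) :
    0 < Filter.liminf
        (fun N : ℕ =>
          (∫ ω, LMBM (fun i : Fin N => X i ω) (fun j : Fin N => Y j ω) ∂ℙ) /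
            (N : ℝ) ^ (1 - 1 / (d : ℝ)))
        atTop := by
  have hc : (0:ℝ) < (2:ℝ) ^ (-(1 / (d:ℝ))) / 4 := by positivity
  refine hc.trans_le (Filter.le_liminf_of_le ?_ ?_)
  · obtain ⟨C, hC⟩ := upper_bound ℙ X Y hd hmeas hindep hunif
    refine ⟨C, fun a ha => ?_⟩
    have ha' : ∀ᶠ N : ℕ in atTop, a ≤ (∫ ω, LMBM (fun i : Fin N => X i ω) (fun j : Fin N => Y j ω) ∂ℙ) /
            (N : ℝ) ^ (1 - 1 / (d : ℝ)) := ha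
    obtain ⟨M, hM⟩ := eventually_atTop.1 ha'
    have hMd : M ≤ 2 ^ (d * M) := by
      refine Nat.lt_two_pow_self.le.trans (Nat.pow_le_pow_right two_pos ?_)
      nlinarith
    refine (hM _ hMd).trans ?_
    have hd0 : (d:ℝ) ≠ 0 := by positivity
    have e : ((2 ^ (d * M) : ℕ) : ℝ) ^ (1 - 1 / (d : ℝ)) = (2:ℝ) ^ (d * M) * ((2:ℝ) ^ M)⁻¹ := by
      push_cast
      rw [Real.rpow_sub (by positivity), Real.rpow_one, div_eq_mul_inv]
      congr 2
      rw [← Real.rpow_natCast, ← Real.rpow_mul (by norm_num)]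
      push_cast
      rw [mul_one_div, mul_div_cancel_left₀ _ hd0, Real.rpow_natCast]
    rw [e, div_le_iff₀ (by positivity)]
    exact hC M
  · filter_upwards [eventually_ge_atTop 1] with N hN
    have : (0:ℝ) < N := by exact_mod_cast hN
    rw [le_div_iff₀ (by positivity)]
    exact lower_bound ℙ X Y hd hmeas hindep hunif N hN
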